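/- Let b ≥ 2 be an integer, s ∈ ℕ, and let a = (a_j)_{j≥1} be a nondecreasing sequence of real weights. Then there exist positive constants c_{1,s}, c_{2,s}, c_{3,s}, c_{4,s}, which may depend on s and a but not on n, such that for all n ∈ ℕ one has exp(−(log n)²/(2 s log b) − c_{1,s}·log n − c_{2,s}) ≤ e(n, s, W_{s,a}) ≤ c_{3,s}·exp(−c_{4,s}·(log n)²). In particular e(n, s, W_{s,a}) is of order exp(Θ(−(log n)²)). -/

import Mathlib

open MeasureTheory Matrix Filter
open scoped ENNReal BigOperators Topology

noncomputable section

/-- The `b`-adic digit of `k : ℕ` at place `b^i` (i.e. the `(i+1)`-st digit). -/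
def natDigit (b k i : ℕ) : ℕ := k / b ^ i % b

/-- The `(i+1)`-st `b`-adic digit of a real number `x ∈ [0,1)`
(using the expansion in which infinitely many digits differ from `b-1`). -/
def realDigit (b : ℕ) (x : ℝ) (i : ℕ) : ℕ := (⌊x * (b : ℝ) ^ (i + 1)⌋ % (b : ℤ)).toNat

/-- The `k`-th one-dimensional `b`-adic Walsh function. -/
def wal1 (b k : ℕ) (x : ℝ) : ℂ :=
  Complex.exp (2 * Real.pi * Complex.I / (b : ℂ) *
    ((∑ i ∈ Finset.range k, natDigit b k i * realDigit b x i : ℕ) : ℂ))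

/-- The `k`-th `s`-dimensional `b`-adic Walsh function. -/
def wal (b : ℕ) {s : ℕ} (k : Fin s → ℕ) (x : Fin s → ℝ) : ℂ :=
  ∏ j, wal1 b (k j) (x j)

/-- The unit cube `[0,1)^s`. -/
def unitCube (s : ℕ) : Set (Fin s → ℝ) := Set.univ.pi fun _ => Set.Ico (0 : ℝ) 1

/-- The `k`-th Walsh coefficient of `f`. -/
def walshCoeff (b : ℕ) {s : ℕ} (f : (Fin s → ℝ) → ℝ) (k : Fin s → ℕ) : ℂ :=
  ∫ x in unitCube s, (f x : ℂ) * (starRingEnd ℂ) (wal b k x)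

/-- The generalized Dick weight `μ_a(k)`, one-dimensional case. -/
def dickWt (b : ℕ) (a : ℝ) (k : ℕ) : ℝ :=
  ∑ i ∈ Finset.range k, if natDigit b k i ≠ 0 then ((i : ℝ) + 1 + a) else 0

/-- The generalized Dick weight `μ_a(k)` for vectors. -/
def dickWtV (b : ℕ) {s : ℕ} (a : Fin s → ℝ) (k : Fin s → ℕ) : ℝ :=
  ∑ j, dickWt b (a j) (k j)

/-- The modified Dick weight `μ'_a(k)`, one-dimensional case. -/
def mdickWt (b : ℕ) (a : ℝ) (k : ℕ) : ℝ :=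
  ∑ i ∈ Finset.range k, if natDigit b k i ≠ 0 then max ((i : ℝ) + 1 + a) 1 else 0

/-- The modified Dick weight `μ'_a(k)` for vectors. -/
def mdickWtV (b : ℕ) {s : ℕ} (a : Fin s → ℝ) (k : Fin s → ℕ) : ℝ :=
  ∑ j, mdickWt b (a j) (k j)

/-- Digitwise subtraction modulo `b` of natural numbers. -/
def dsub (b k k' : ℕ) : ℕ :=
  ∑ i ∈ Finset.range (k + k' + 1), ((natDigit b k i + (b - natDigit b k' i)) % b) * b ^ i

/-- The integral of `f` over the unit cube. -/
def intBox (s : ℕ) (f : (Fin s → ℝ) → ℝ) : ℝ := ∫ x in unitCube s, f x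

/-- Membership in the Walsh space `W_{s,a}`: `f` equals its (convergent) Walsh series
and has finite norm. -/
def MemW (b : ℕ) {s : ℕ} (a : Fin s → ℝ) (f : (Fin s → ℝ) → ℝ) : Prop :=
  (∀ x ∈ unitCube s, HasSum (fun k : Fin s → ℕ => walshCoeff b f k * wal b k x) ((f x : ℂ))) ∧
  BddAbove (Set.range fun k : Fin s → ℕ => ‖walshCoeff b f k‖ * (b : ℝ) ^ dickWtV b a k)

/-- The norm of the Walsh space `W_{s,a}`. -/
def normW (b : ℕ) {s : ℕ} (a : Fin s → ℝ) (f : (Fin s → ℝ) → ℝ) : ℝ :=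
  ⨆ k : Fin s → ℕ, ‖walshCoeff b f k‖ * (b : ℝ) ^ dickWtV b a k

/-- Membership in the modified Walsh space `W'_{s,a}`. -/
def MemW' (b : ℕ) {s : ℕ} (a : Fin s → ℝ) (f : (Fin s → ℝ) → ℝ) : Prop :=
  (∀ x ∈ unitCube s, HasSum (fun k : Fin s → ℕ => walshCoeff b f k * wal b k x) ((f x : ℂ))) ∧
  BddAbove (Set.range fun k : Fin s → ℕ => ‖walshCoeff b f k‖ * (b : ℝ) ^ mdickWtV b a k)

/-- The norm of the modified Walsh space `W'_{s,a}`. -/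
def normW' (b : ℕ) {s : ℕ} (a : Fin s → ℝ) (f : (Fin s → ℝ) → ℝ) : ℝ :=
  ⨆ k : Fin s → ℕ, ‖walshCoeff b f k‖ * (b : ℝ) ^ mdickWtV b a k

/-- The worst-case error of the algorithm `A` over the unit ball of `(H, N)`. -/
def worstErr (s : ℕ) (H : Set ((Fin s → ℝ) → ℝ)) (N : ((Fin s → ℝ) → ℝ) → ℝ)
    (A : ((Fin s → ℝ) → ℝ) → ℝ) : ℝ≥0∞ :=
  ⨆ (f : (Fin s → ℝ) → ℝ) (_ : f ∈ H) (_ : N f ≤ 1), ENNReal.ofReal |intBox s f - A f|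

/-- The `n`-th minimal worst-case error over all algorithms using `n` function values
at points of the unit cube. -/
def minErr (n s : ℕ) (H : Set ((Fin s → ℝ) → ℝ)) (N : ((Fin s → ℝ) → ℝ) → ℝ) : ℝ≥0∞ :=
  ⨅ (t : Fin n → Fin s → ℝ) (_ : ∀ i, t i ∈ unitCube s) (φ : (Fin n → ℝ) → ℝ),
    worstErr s H N fun f => φ fun i => f (t i)

/-- Partial derivative in the `j`-th coordinate. -/
def pd {s : ℕ} (j : Fin s) (f : (Fin s → ℝ) → ℝ) : (Fin s → ℝ) → ℝ :=
  fun x => deriv (fun t => f (Function.update x j t)) (x j)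

/-- The mixed partial derivative `f^{(α)}`. -/
def mpd {s : ℕ} (α : Fin s → ℕ) (f : (Fin s → ℝ) → ℝ) : (Fin s → ℝ) → ℝ :=
  (List.finRange s).foldr (fun j g => (pd j)^[α j] g) f

/-- Membership in the space `S_{s,u}` of smooth functions. -/
def MemS {s : ℕ} (u : Fin s → ℝ) (f : (Fin s → ℝ) → ℝ) : Prop :=
  ContDiff ℝ (⊤ : ℕ∞) f ∧
  BddAbove (Set.range fun α : Fin s → ℕ =>
    (∫ x in unitCube s, |mpd α f x|) / ∏ j, u j ^ α j)

/-- The norm of the space `S_{s,u}`. -/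
def normS {s : ℕ} (u : Fin s → ℝ) (f : (Fin s → ℝ) → ℝ) : ℝ :=
  ⨆ α : Fin s → ℕ, (∫ x in unitCube s, |mpd α f x|) / ∏ j, u j ^ α j

/-- The column vector of the first `m` `b`-adic digits of `k`. -/
def trunc (b m k : ℕ) : Fin m → ZMod b := fun i => (natDigit b k (i : ℕ) : ZMod b)

/-- The `m`-th point of the digital net determined by generating matrices `G`. -/
def netPoint (b : ℕ) {s l d : ℕ} (G : Fin s → Matrix (Fin l) (Fin d) (ZMod b)) (m : ℕ) :
    Fin s → ℝ :=
  fun j => ∑ i : Fin l, (((G j).mulVec (trunc b d m)) i).val / (b : ℝ) ^ ((i : ℕ) + 1)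

/-- The dual net of the digital net determined by `G`. -/
def dualNet (b : ℕ) {s l d : ℕ} (G : Fin s → Matrix (Fin l) (Fin d) (ZMod b)) :
    Set (Fin s → ℕ) :=
  {k | ∑ j, (G j)ᵀ.mulVec (trunc b l (k j)) = 0}

/-- The QMC algorithm given by the digital net with generating matrices `G`. -/
def qmcNet (b : ℕ) {s l d : ℕ} (G : Fin s → Matrix (Fin l) (Fin d) (ZMod b))
    (f : (Fin s → ℝ) → ℝ) : ℝ :=
  ((b : ℝ) ^ d)⁻¹ * ∑ m ∈ Finset.range (b ^ d), f (netPoint b G m)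

/-- `n_j = #{i ∈ ℕ : i + a ≤ 1}` (with `i` ranging over positive integers). -/
def negCount (a : ℝ) : ℕ := Set.ncard {i : ℕ | 0 < i ∧ (i : ℝ) + a ≤ 1}

/-!
Lower bound: if `n < b ^ (m * s)`, some elementary box of side length `b ^ (-m)` contains none of
the `n` nodes. Its indicator function, normalized to have integral `1`, is a Walsh–Dirichlet kernel:
its Walsh coefficients have modulus one for frequencies with at most `m` digits in each component,
and vanish otherwise. Such frequencies have weight at most `s * m ^ 2 / 2 + O(m)`, so
`b ^ (-s * m ^ 2 / 2 - O(m))` times the kernel lies in the unit ball and is invisible to the nodes;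
take `m ≈ log n / (s * log b)`.

Upper bound: a Walsh function takes only finitely many values, so Carathéodory's theorem gives
positive quadrature weights summing to `1` on `2 * |A| + 1` nodes that integrate every Walsh
function with frequency in a finite set `A` exactly. Take `A = {k | μ_a(k) ≤ T}`. The error is at
most `∑_{μ_a(k) > T} b ^ (-μ_a(k)) = O(b ^ (-T / 2))`. Factoring `∑ₖ b ^ (-r * μ_a(k))` over digits
bounds it by `exp (K / r)`, and `r = 1 / √T` then yields `|A| ≤ exp (O(√T))`, so that `n` nodes
suffice for some `T` of order `(log n) ^ 2`.
-/

/-! ### Digits -/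

section Digits

variable {b : ℕ}

lemma realDigit_lt (hb : 0 < b) (x : ℝ) (i : ℕ) : realDigit b x i < b := by
  have hb' : (0 : ℤ) < b := by exact_mod_cast hb
  exact (Int.toNat_lt (Int.emod_nonneg _ hb'.ne')).2 (Int.emod_lt_of_pos _ hb')

lemma natDigit_eq_zero_of_lt_pow {k i : ℕ} (h : k < b ^ i) : natDigit b k i = 0 := by
  rw [natDigit, Nat.div_eq_of_lt h, Nat.zero_mod]

lemma sum_range_eq_of_natDigit {R : Type*} [AddCommMonoid R] (hb : 1 < b) {k M : ℕ}
    (hk : k < b ^ M) {g : ℕ → R} (hg : ∀ i, natDigit b k i = 0 → g i = 0) :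
    ∑ i ∈ Finset.range k, g i = ∑ i ∈ Finset.range M, g i := by
  have hzero {p : ℕ} (hp : k < b ^ p) {i : ℕ} (hi : i ∉ Finset.range p) : g i = 0 :=
    hg i <| natDigit_eq_zero_of_lt_pow <| hp.trans_le <|
      Nat.pow_le_pow_right (by lia) (by simpa using hi)
  rcases le_total k M with h | h
  · exact Finset.sum_subset (Finset.range_mono h) fun i _ => hzero (Nat.lt_pow_self hb)
  · exact (Finset.sum_subset (Finset.range_mono h) fun i _ => hzero hk).symm

lemma sum_prod_natDigit {R : Type*} [CommSemiring R] (M : ℕ) (u : ℕ → ℕ → R) :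
    ∑ k ∈ Finset.range (b ^ M), ∏ i ∈ Finset.range M, u i (natDigit b k i)
      = ∏ i ∈ Finset.range M, ∑ d ∈ Finset.range b, u i d := by
  simp only [Finset.sum_range, Finset.prod_range]
  rw [Fintype.prod_sum fun (i : Fin M) (d : Fin b) => u i d]
  refine Fintype.sum_equiv finFunctionFinEquiv.symm _ _ fun k => ?_
  simp only [natDigit, finFunctionFinEquiv_symm_apply_val]

lemma eq_of_natDigit_eq {k l M : ℕ} (hk : k < b ^ M) (hl : l < b ^ M)
    (h : ∀ i < M, natDigit b k i = natDigit b l i) : k = l := by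
  have : finFunctionFinEquiv.symm ⟨k, hk⟩ = finFunctionFinEquiv.symm ⟨l, hl⟩ :=
    funext fun i => Fin.ext (by simpa [natDigit] using h i i.2)
  simpa using this

lemma realDigit_eq_natDigit_floor (hb : 0 < b) {x : ℝ} (hx : 0 ≤ x) {i M : ℕ} (hi : i < M) :
    realDigit b x i = natDigit b ⌊x * (b ^ M : ℕ)⌋₊ (M - 1 - i) := by
  have hscale : x * (b : ℝ) ^ (i + 1) = x * (b ^ M : ℕ) / (b ^ (M - 1 - i) : ℕ) := by
    have hM : M = (i + 1) + (M - 1 - i) := by lia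
    have hb' : (b : ℝ) ^ (M - 1 - i) ≠ 0 := by positivity
    push_cast
    rw [eq_div_iff hb', mul_assoc, ← pow_add, ← hM]
  rw [realDigit, natDigit, hscale, ← Int.natCast_floor_eq_floor (by positivity),
    Nat.floor_div_natCast, ← Int.natCast_mod, Int.toNat_natCast]

lemma integral_comp_natFloor {E : Type*} [NormedAddCommGroup E] [NormedSpace ℝ E] [CompleteSpace E]
    (H : ℕ → E) (n : ℕ) : ∫ x in (0 : ℝ)..n, H ⌊x⌋₊ = ∑ c ∈ Finset.range n, H c := by
  have hconst (c : ℕ) : Set.EqOn (fun x : ℝ => H ⌊x⌋₊) (fun _ => H c)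
      (Set.uIoo (c : ℝ) (c + 1 : ℕ)) := by
    intro x hx
    rw [Set.uIoo_of_le (by simp)] at hx
    have hfloor : ⌊x⌋₊ = c :=
      (Nat.floor_eq_iff (c.cast_nonneg.trans hx.1.le)).2 ⟨hx.1.le, by exact_mod_cast hx.2⟩
    simp only [hfloor]
  have hint (c : ℕ) : IntervalIntegrable (fun x : ℝ => H ⌊x⌋₊) volume c (c + 1 : ℕ) :=
    (intervalIntegrable_const (c := H c)).congr_uIoo (hconst c).symm
  rw [← Nat.cast_zero,
    ← intervalIntegral.sum_integral_adjacent_intervals (a := Nat.cast) fun c _ => hint c]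
  exact Finset.sum_congr rfl fun c _ => by
    rw [intervalIntegral.integral_congr_uIoo (hconst c)]
    simp

/-- The first `M` digits of a uniform point of `[0,1)` are independent and uniform. -/
lemma integral_prod_realDigit {𝕜 : Type*} [RCLike 𝕜] (hb : 0 < b) (M : ℕ)
    (u : ℕ → ℕ → 𝕜) :
    ∫ x in Set.Ico (0 : ℝ) 1, ∏ i ∈ Finset.range M, u i (realDigit b x i)
      = ∏ i ∈ Finset.range M, (b : 𝕜)⁻¹ * ∑ d ∈ Finset.range b, u i d := by
  have hN : ((b ^ M : ℕ) : ℝ) ≠ 0 := by positivity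
  have hdigits : Set.EqOn (fun x => ∏ i ∈ Finset.range M, u i (realDigit b x i))
      (fun x => ∏ i ∈ Finset.range M, u (M - 1 - i) (natDigit b ⌊x * (b ^ M : ℕ)⌋₊ i))
      (Set.Ico 0 1) := by
    intro x hx
    simp only
    rw [← Finset.prod_range_reflect]
    refine Finset.prod_congr rfl fun i hi => ?_
    have hi' := Finset.mem_range.1 hi
    rw [realDigit_eq_natDigit_floor hb hx.1 (show M - 1 - i < M by lia)]
    congr 2
    lia
  rw [setIntegral_congr_fun measurableSet_Ico hdigits, integral_Ico_eq_integral_Ioc,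
    ← intervalIntegral.integral_of_le zero_le_one,
    intervalIntegral.integral_comp_mul_right (fun x => ∏ i ∈ Finset.range M,
      u (M - 1 - i) (natDigit b ⌊x⌋₊ i)) hN, zero_mul, one_mul, integral_comp_natFloor fun c =>
      ∏ i ∈ Finset.range M, u (M - 1 - i) (natDigit b c i),
    sum_prod_natDigit M fun i d => u (M - 1 - i) d,
    Finset.prod_range_reflect (fun i => ∑ d ∈ Finset.range b, u i d), Finset.prod_mul_distrib]
  simp [RCLike.real_smul_eq_coe_mul]

lemma measurable_realDigit (b i : ℕ) : Measurable fun x => realDigit b x i :=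
  (measurable_from_top (f := fun z : ℤ => (z % (b : ℤ)).toNat)).comp
    (Int.measurable_floor.comp (measurable_id.mul_const _))

end Digits

/-! ### Walsh functions -/

section RootsOfUnity

lemma sum_pow_div_pow_of_isPrimitiveRoot {K : Type*} [Field K] {ζ : K} {b : ℕ}
    (hζ : IsPrimitiveRoot ζ b) {x y : ℕ} (hx : x < b) (hy : y < b) :
    ∑ d ∈ Finset.range b, (ζ ^ x / ζ ^ y) ^ d = if x = y then (b : K) else 0 := by
  have hζy : ζ ^ y ≠ 0 := pow_ne_zero _ (hζ.ne_zero (by lia))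
  split_ifs with hxy
  · simp [hxy, div_self hζy]
  · have hne : ζ ^ x / ζ ^ y ≠ 1 := fun h => hxy (hζ.pow_inj hx hy ((div_eq_one_iff_eq hζy).1 h))
    have hpow : (ζ ^ x / ζ ^ y) ^ b = 1 := by
      rw [div_pow, pow_right_comm, pow_right_comm ζ y, hζ.pow_eq_one, one_pow, one_pow, div_one]
    rw [geom_sum_eq hne, hpow, sub_self, zero_div]

/-- The root of unity `ω_b = exp(2πi/b)` generating the values of the Walsh functions. -/
def walshRoot (b : ℕ) : ℂ := Complex.exp (2 * Real.pi * Complex.I / (b : ℂ))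

variable {b : ℕ}

lemma isPrimitiveRoot_walshRoot (hb : b ≠ 0) : IsPrimitiveRoot (walshRoot b) b :=
  Complex.isPrimitiveRoot_exp b hb

lemma norm_walshRoot (b : ℕ) : ‖walshRoot b‖ = 1 := by
  have : walshRoot b = Complex.exp ((2 * Real.pi / b : ℝ) * Complex.I) := by
    rw [walshRoot]; push_cast; ring_nf
  rw [this, Complex.norm_exp_ofReal_mul_I]

lemma sum_walshRoot_pow_mul_conj {x y : ℕ} (hx : x < b) (hy : y < b) :
    ∑ d ∈ Finset.range b, walshRoot b ^ (d * x) * (starRingEnd ℂ) (walshRoot b ^ (d * y))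
      = if x = y then (b : ℂ) else 0 := by
  rw [← sum_pow_div_pow_of_isPrimitiveRoot (isPrimitiveRoot_walshRoot (by lia)) hx hy]
  refine Finset.sum_congr rfl fun d _ => ?_
  rw [← Complex.inv_eq_conj (by simp [norm_walshRoot]), ← div_eq_mul_inv, div_pow, ← pow_mul',
    ← pow_mul']

end RootsOfUnity

section Walsh

variable {b s : ℕ}

lemma wal1_eq_walshRoot_pow (b k : ℕ) (x : ℝ) :
    wal1 b k x = walshRoot b ^ ∑ i ∈ Finset.range k, natDigit b k i * realDigit b x i := by
  rw [wal1, walshRoot, ← Complex.exp_nat_mul, mul_comm]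

lemma wal1_eq_prod (hb : 1 < b) {k M : ℕ} (hk : k < b ^ M) (x : ℝ) :
    wal1 b k x = ∏ i ∈ Finset.range M, walshRoot b ^ (natDigit b k i * realDigit b x i) := by
  rw [wal1_eq_walshRoot_pow, Finset.prod_pow_eq_pow_sum,
    sum_range_eq_of_natDigit hb hk fun i hi => by rw [hi, zero_mul]]

lemma norm_wal (k : Fin s → ℕ) (x : Fin s → ℝ) : ‖wal b k x‖ = 1 := by
  simp [wal, wal1_eq_walshRoot_pow, norm_walshRoot]

lemma wal_zero (x : Fin s → ℝ) : wal b 0 x = 1 := by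
  simp [wal, wal1]

lemma wal_pow_eq_one (hb : b ≠ 0) (k : Fin s → ℕ) (x : Fin s → ℝ) : wal b k x ^ b = 1 := by
  simp only [wal, wal1_eq_walshRoot_pow, ← Finset.prod_pow, pow_right_comm _ _ b,
    (isPrimitiveRoot_walshRoot hb).pow_eq_one, one_pow, Finset.prod_const_one]

lemma measurable_wal (b : ℕ) (k : Fin s → ℕ) : Measurable (wal b k) := by
  have hexponent (j : Fin s) : Measurable fun x : ℝ =>
      ∑ i ∈ Finset.range (k j), natDigit b (k j) i * realDigit b x i :=
    Finset.measurable_sum _ fun i _ => (measurable_realDigit b i).const_mul _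
  refine Finset.measurable_prod _ fun j _ => ?_
  simp only [wal1_eq_walshRoot_pow]
  exact (measurable_from_top (f := fun e : ℕ => walshRoot b ^ e)).comp
    ((hexponent j).comp (measurable_pi_apply j))

lemma wal1_mul_conj_wal1 (hb : 1 < b) {k l M : ℕ} (hk : k < b ^ M) (hl : l < b ^ M) (x y : ℝ) :
    wal1 b k x * (starRingEnd ℂ) (wal1 b l y) =
      ∏ i ∈ Finset.range M, walshRoot b ^ (natDigit b k i * realDigit b x i) *
        (starRingEnd ℂ) (walshRoot b ^ (natDigit b l i * realDigit b y i)) := by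
  rw [wal1_eq_prod hb hk, wal1_eq_prod hb hl, map_prod, Finset.prod_mul_distrib]

lemma integral_wal1_mul_conj (hb : 1 < b) (k l : ℕ) :
    ∫ x in Set.Ico (0 : ℝ) 1, wal1 b k x * (starRingEnd ℂ) (wal1 b l x)
      = if k = l then 1 else 0 := by
  have hb0 : (b : ℂ) ≠ 0 := Nat.cast_ne_zero.2 (by lia)
  obtain ⟨M, hk, hl⟩ : ∃ M, k < b ^ M ∧ l < b ^ M :=
    ⟨max k l, (le_max_left k l).trans_lt (Nat.lt_pow_self hb),
      (le_max_right k l).trans_lt (Nat.lt_pow_self hb)⟩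
  simp only [wal1_mul_conj_wal1 hb hk hl, mul_comm (natDigit b _ _)]
  rw [integral_prod_realDigit (by lia) M fun i d => walshRoot b ^ (d * natDigit b k i) *
    (starRingEnd ℂ) (walshRoot b ^ (d * natDigit b l i))]
  have hdigit (k i : ℕ) : natDigit b k i < b := Nat.mod_lt _ (by lia)
  simp only [sum_walshRoot_pow_mul_conj (hdigit _ _) (hdigit _ _)]
  split_ifs with hkl
  · simp [hkl, hb0]
  · obtain ⟨i, hi, hne⟩ : ∃ i < M, natDigit b k i ≠ natDigit b l i := by
      by_contra! h
      exact hkl (eq_of_natDigit_eq hk hl h)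
    exact Finset.prod_eq_zero (Finset.mem_range.2 hi) (by simp [hne])

lemma integral_wal_mul_conj (hb : 1 < b) (k l : Fin s → ℕ) :
    ∫ x in unitCube s, wal b k x * (starRingEnd ℂ) (wal b l x) = if k = l then 1 else 0 := by
  simp only [wal, unitCube, volume_pi, Measure.restrict_pi_pi, map_prod, ← Finset.prod_mul_distrib]
  rw [integral_fintype_prod_eq_prod fun j x => wal1 b (k j) x * (starRingEnd ℂ) (wal1 b (l j) x)]
  simp only [integral_wal1_mul_conj hb, Fintype.prod_ite_zero, Finset.prod_const_one, funext_iff]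

lemma integral_wal_of_ne_zero (hb : 1 < b) {k : Fin s → ℕ} (hk : k ≠ 0) :
    ∫ x in unitCube s, wal b k x = 0 := by
  simpa [wal_zero, hk] using integral_wal_mul_conj hb k 0

end Walsh

/-! ### The Walsh space -/

section WalshSpace

variable {b s : ℕ} {f : (Fin s → ℝ) → ℝ}

instance isProbabilityMeasure_restrict_unitCube (s : ℕ) :
    IsProbabilityMeasure ((volume : Measure (Fin s → ℝ)).restrict (unitCube s)) :=
  ⟨by simp [unitCube, volume_pi, Measure.pi_pi]⟩

lemma zero_mem_unitCube (s : ℕ) : (0 : Fin s → ℝ) ∈ unitCube s := by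
  simp [unitCube]

lemma intBox_eq_walshCoeff_zero (b : ℕ) (f : (Fin s → ℝ) → ℝ) :
    (intBox s f : ℂ) = walshCoeff b f 0 := by
  simp only [intBox, walshCoeff, wal_zero, map_one, mul_one]
  exact integral_ofReal.symm

lemma walshCoeff_neg (f : (Fin s → ℝ) → ℝ) (k : Fin s → ℕ) :
    walshCoeff b (-f) k = -walshCoeff b f k := by
  simp [walshCoeff, integral_neg]

lemma MemW.neg {a : Fin s → ℝ} (hf : MemW b a f) : MemW b a (-f) := by
  refine ⟨fun x hx => ?_, by simpa only [walshCoeff_neg, norm_neg] using hf.2⟩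
  simpa [walshCoeff_neg] using (hf.1 x hx).neg

lemma normW_neg (a : Fin s → ℝ) (f : (Fin s → ℝ) → ℝ) : normW b a (-f) = normW b a f := by
  simp only [normW, walshCoeff_neg, norm_neg]

lemma norm_walshCoeff_le {a : Fin s → ℝ} (hb : 0 < b) (hf : MemW b a f) (hN : normW b a f ≤ 1)
    (k : Fin s → ℕ) : ‖walshCoeff b f k‖ ≤ (b : ℝ) ^ (-dickWtV b a k) := by
  rw [Real.rpow_neg (by positivity), ← one_div, le_div_iff₀ (by positivity)]
  exact (le_ciSup hf.2 k).trans hN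

section WalshPolynomial

variable {A : Finset (Fin s → ℕ)} {c : (Fin s → ℕ) → ℂ}

lemma walshCoeff_of_eq_sum (hb : 1 < b) (hf : ∀ x, (f x : ℂ) = ∑ k ∈ A, c k * wal b k x)
    (l : Fin s → ℕ) : walshCoeff b f l = if l ∈ A then c l else 0 := by
  have hint (k : Fin s → ℕ) :
      IntegrableOn (fun x => wal b k x * (starRingEnd ℂ) (wal b l x)) (unitCube s) :=
    Integrable.of_bound ((measurable_wal b k).mul
      (continuous_star.measurable.comp (measurable_wal b l))).aestronglyMeasurable 1
      (.of_forall fun x => by simp [norm_wal])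
  simp only [walshCoeff, hf, Finset.sum_mul, mul_assoc]
  rw [integral_finsetSum _ fun k _ => (hint k).const_mul (c k)]
  simp [integral_const_mul, integral_wal_mul_conj hb]

lemma memW_and_normW_le_one_of_eq_sum (hb : 1 < b)
    (hf : ∀ x, (f x : ℂ) = ∑ k ∈ A, c k * wal b k x) {a : Fin s → ℝ}
    (hc : ∀ k ∈ A, ‖c k‖ * (b : ℝ) ^ dickWtV b a k ≤ 1) : MemW b a f ∧ normW b a f ≤ 1 := by
  have hcoeff := walshCoeff_of_eq_sum hb hf
  have hbound (k : Fin s → ℕ) : ‖walshCoeff b f k‖ * (b : ℝ) ^ dickWtV b a k ≤ 1 := by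
    rw [hcoeff]
    split_ifs with hk
    · exact hc k hk
    · simp
  refine ⟨⟨fun x _ => ?_, 1, Set.forall_mem_range.2 hbound⟩, ciSup_le hbound⟩
  have hsupp : ∀ k ∉ A, walshCoeff b f k * wal b k x = 0 := fun k hk => by
    rw [hcoeff, if_neg hk, zero_mul]
  have hsum : (f x : ℂ) = ∑ k ∈ A, walshCoeff b f k * wal b k x := by
    rw [hf]
    exact Finset.sum_congr rfl fun k hk => by rw [hcoeff, if_pos hk]
  rw [hsum]
  exact hasSum_sum_of_ne_finset_zero hsupp

end WalshPolynomial

end WalshSpace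

/-! ### Minimal errors -/

section MinimalErrors

variable {n s : ℕ} {H : Set ((Fin s → ℝ) → ℝ)} {N : ((Fin s → ℝ) → ℝ) → ℝ}

lemma minErr_le_of_algorithm {ε : ℝ} {t : Fin n → Fin s → ℝ} (ht : ∀ i, t i ∈ unitCube s)
    (φ : (Fin n → ℝ) → ℝ) (hφ : ∀ f ∈ H, N f ≤ 1 → |intBox s f - φ fun i => f (t i)| ≤ ε) :
    minErr n s H N ≤ ENNReal.ofReal ε :=
  iInf_le_of_le t <| iInf_le_of_le ht <| iInf_le_of_le φ <|
    iSup_le fun f => iSup_le fun hf => iSup_le fun hN => ENNReal.ofReal_le_ofReal (hφ f hf hN)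

/-- No algorithm can distinguish `f` from `-f` when `f` vanishes at its nodes. -/
lemma le_minErr_of_fooling {δ : ℝ}
    (hfool : ∀ t : Fin n → Fin s → ℝ, (∀ i, t i ∈ unitCube s) → ∃ f ∈ H, -f ∈ H ∧
      N f ≤ 1 ∧ N (-f) ≤ 1 ∧ (∀ i, f (t i) = 0) ∧ δ ≤ intBox s f) :
    ENNReal.ofReal δ ≤ minErr n s H N := by
  refine le_iInf fun t => le_iInf fun ht => le_iInf fun φ => ?_
  obtain ⟨f, hf, hf', hN, hN', hzero, hδ⟩ := hfool t ht
  have herr {g : (Fin s → ℝ) → ℝ} (hg : g ∈ H) (hNg : N g ≤ 1) (hgt : ∀ i, g (t i) = 0)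
      (hδg : δ ≤ |intBox s g - φ 0|) :
      ENNReal.ofReal δ ≤ worstErr s H N fun f => φ fun i => f (t i) := by
    have hvalues : (fun i => g (t i)) = 0 := funext hgt
    refine le_iSup_of_le g <| le_iSup_of_le hg <| le_iSup_of_le hNg <|
      ENNReal.ofReal_le_ofReal ?_
    simpa only [hvalues] using hδg
  rcases le_total (φ 0) 0 with h0 | h0
  · exact herr hf hN hzero (le_abs.2 (Or.inl (by linarith)))
  · have hneg : intBox s (-f) = -intBox s f := integral_neg f
    exact herr hf' hN' (by simpa using hzero) (le_abs.2 (Or.inr (by linarith)))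

end MinimalErrors

/-! ### Dick weights -/

/-- The frequencies `k` all of whose components have at most `m` digits in base `b`. -/
def digitBox (b m s : ℕ) : Finset (Fin s → ℕ) :=
  Fintype.piFinset fun _ => Finset.range (b ^ m)

/-- The constant `K` in the bound `∑ₖ b ^ (-r * μ_a(k)) ≤ exp (K / r)` for `0 < r ≤ 1`. -/
def dickConst (b : ℕ) (a : ℝ) : ℝ := (b - 1) * (b : ℝ) ^ |a| / Real.log b

section DickWeights

variable {b m s : ℕ}

lemma mem_digitBox {k : Fin s → ℕ} : k ∈ digitBox b m s ↔ ∀ j, k j < b ^ m := by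
  simp [digitBox]

lemma exists_subset_digitBox (hb : 1 < b) (u : Finset (Fin s → ℕ)) :
    ∃ m, u ⊆ digitBox b m s := by
  refine ⟨u.sup fun k => Finset.univ.sup k, fun k hk => mem_digitBox.2 fun j => ?_⟩
  calc k j < b ^ k j := Nat.lt_pow_self hb
    _ ≤ b ^ Finset.univ.sup k :=
      Nat.pow_le_pow_right (by lia) (Finset.le_sup (Finset.mem_univ j))
    _ ≤ b ^ u.sup fun k => Finset.univ.sup k :=
      Nat.pow_le_pow_right (by lia) (Finset.le_sup (f := fun k => Finset.univ.sup k) hk)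

lemma dickWt_eq_sum_range (hb : 1 < b) (a : ℝ) {k M : ℕ} (hk : k < b ^ M) :
    dickWt b a k = ∑ i ∈ Finset.range M, if natDigit b k i ≠ 0 then ((i : ℝ) + 1 + a) else 0 :=
  sum_range_eq_of_natDigit hb hk fun i hi => by simp [hi]

lemma dickWt_le (hb : 1 < b) (a : ℝ) {k : ℕ} (hk : k < b ^ m) :
    dickWt b a k ≤ m * (m + 1) / 2 + m * |a| := by
  have hsum : ∑ i ∈ Finset.range m, ((i : ℝ) + 1 + |a|) = m * (m + 1) / 2 + m * |a| := by
    clear hk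
    induction m with
    | zero => simp
    | succ m ih => rw [Finset.sum_range_succ, ih]; push_cast; ring
  rw [dickWt_eq_sum_range hb a hk, ← hsum]
  refine Finset.sum_le_sum fun i _ => ?_
  split_ifs
  · gcongr
    exact le_abs_self a
  · positivity

lemma dickWtV_le (hb : 1 < b) (a : Fin s → ℝ) {k : Fin s → ℕ} (hk : k ∈ digitBox b m s) :
    dickWtV b a k ≤ s * (m * (m + 1) / 2) + m * ∑ j, |a j| := by
  calc dickWtV b a k
      ≤ ∑ j, (m * (m + 1) / 2 + m * |a j|) :=
        Finset.sum_le_sum fun j _ => dickWt_le hb (a j) (mem_digitBox.1 hk j)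
    _ = s * (m * (m + 1) / 2) + m * ∑ j, |a j| := by
        simp [Finset.sum_add_distrib, ← Finset.mul_sum]

lemma dickConst_nonneg (hb : 0 < b) (a : ℝ) : 0 ≤ dickConst b a := by
  have hb' : (1 : ℝ) ≤ b := by exact_mod_cast hb
  exact div_nonneg (mul_nonneg (sub_nonneg.2 hb') (by positivity)) (Real.log_nonneg hb')

lemma sum_rpow_neg_mul_dickWt (hb : 1 < b) (a r : ℝ) (M : ℕ) :
    ∑ k ∈ Finset.range (b ^ M), (b : ℝ) ^ (-(r * dickWt b a k))
      = ∏ i ∈ Finset.range M, (1 + (b - 1) * (b : ℝ) ^ (-(r * ((i : ℝ) + 1 + a)))) := by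
  set v : ℕ → ℕ → ℝ := fun i d => if d ≠ 0 then (b : ℝ) ^ (-(r * ((i : ℝ) + 1 + a))) else 1
  have hfactor (k : ℕ) (hk : k ∈ Finset.range (b ^ M)) :
      (b : ℝ) ^ (-(r * dickWt b a k)) = ∏ i ∈ Finset.range M, v i (natDigit b k i) := by
    rw [dickWt_eq_sum_range hb a (Finset.mem_range.1 hk), Finset.mul_sum,
      ← Finset.sum_neg_distrib, Real.rpow_sum_of_pos (by positivity)]
    refine Finset.prod_congr rfl fun i _ => ?_
    simp only [v]
    split_ifs <;> simp
  have hdigit (i : ℕ) :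
      ∑ d ∈ Finset.range b, v i d = 1 + (b - 1) * (b : ℝ) ^ (-(r * ((i : ℝ) + 1 + a))) := by
    obtain ⟨c, rfl⟩ : ∃ c, b = c + 1 := ⟨b - 1, by lia⟩
    rw [Finset.sum_range_succ']
    simp [v, add_comm]
  rw [Finset.sum_congr rfl hfactor, sum_prod_natDigit M v]
  exact Finset.prod_congr rfl fun i _ => hdigit i

lemma sum_exp_neg_mul_succ_le {x : ℝ} (hx : 0 < x) (M : ℕ) :
    ∑ i ∈ Finset.range M, Real.exp (-(x * ((i : ℝ) + 1))) ≤ 1 / x := by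
  have htelescope (i : ℕ) :
      x * Real.exp (-(x * ((i : ℝ) + 1)))
        ≤ Real.exp (-(x * i)) - Real.exp (-(x * ((i + 1 : ℕ) : ℝ))) := by
    have hsplit : Real.exp (-(x * i)) = Real.exp x * Real.exp (-(x * ((i : ℝ) + 1))) := by
      rw [← Real.exp_add]
      ring_nf
    push_cast
    nlinarith [mul_le_mul_of_nonneg_right (Real.add_one_le_exp x)
      (Real.exp_pos (-(x * ((i : ℝ) + 1)))).le]
  rw [le_div_iff₀ hx, mul_comm, Finset.mul_sum]
  calc ∑ i ∈ Finset.range M, x * Real.exp (-(x * ((i : ℝ) + 1)))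
      ≤ ∑ i ∈ Finset.range M, (Real.exp (-(x * i)) - Real.exp (-(x * ((i + 1 : ℕ) : ℝ)))) :=
        Finset.sum_le_sum fun i _ => htelescope i
    _ = 1 - Real.exp (-(x * M)) := by
        rw [Finset.sum_range_sub' fun i : ℕ => Real.exp (-(x * i))]
        simp
    _ ≤ 1 := by linarith [Real.exp_pos (-(x * M))]

section SumOfWeights

variable {r : ℝ}

lemma sum_rpow_neg_mul_dickWt_le (hb : 1 < b) (a : ℝ) (hr : 0 < r) (hr1 : r ≤ 1) (M : ℕ) :
    ∑ k ∈ Finset.range (b ^ M), (b : ℝ) ^ (-(r * dickWt b a k))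
      ≤ Real.exp (dickConst b a / r) := by
  have hb1 : (1 : ℝ) < b := by exact_mod_cast hb
  have hb0 : (0 : ℝ) ≤ b - 1 := sub_nonneg.2 hb1.le
  have hlogb : 0 < Real.log b := Real.log_pos hb1
  have hra : -(r * a) ≤ |a| :=
    calc -(r * a) ≤ |r * a| := neg_le_abs _
      _ = r * |a| := by rw [abs_mul, abs_of_pos hr]
      _ ≤ |a| := mul_le_of_le_one_left (abs_nonneg a) hr1
  have hterm (i : ℕ) : (b : ℝ) ^ (-(r * ((i : ℝ) + 1 + a)))
      ≤ (b : ℝ) ^ |a| * Real.exp (-(r * Real.log b * ((i : ℝ) + 1))) := by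
    rw [Real.rpow_def_of_pos (by positivity), Real.rpow_def_of_pos (by positivity),
      ← Real.exp_add, Real.exp_le_exp]
    linarith [mul_le_mul_of_nonneg_left hra hlogb.le]
  calc ∑ k ∈ Finset.range (b ^ M), (b : ℝ) ^ (-(r * dickWt b a k))
      = ∏ i ∈ Finset.range M, (1 + (b - 1) * (b : ℝ) ^ (-(r * ((i : ℝ) + 1 + a)))) :=
        sum_rpow_neg_mul_dickWt hb a r M
    _ ≤ ∏ i ∈ Finset.range M, Real.exp ((b - 1) *
          ((b : ℝ) ^ |a| * Real.exp (-(r * Real.log b * ((i : ℝ) + 1))))) := by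
        refine Finset.prod_le_prod (fun i _ => by positivity) fun i _ => ?_
        rw [add_comm]
        refine (Real.add_one_le_exp _).trans (Real.exp_le_exp.2 ?_)
        gcongr
        exact hterm i
    _ = Real.exp ((b - 1) * ((b : ℝ) ^ |a| *
          ∑ i ∈ Finset.range M, Real.exp (-(r * Real.log b * ((i : ℝ) + 1))))) := by
        rw [← Real.exp_sum, ← Finset.mul_sum, ← Finset.mul_sum]
    _ ≤ Real.exp ((b - 1) * ((b : ℝ) ^ |a| * (1 / (r * Real.log b)))) := by
        gcongr
        exact sum_exp_neg_mul_succ_le (by positivity) M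
    _ = Real.exp (dickConst b a / r) := by
        rw [dickConst]
        field_simp

lemma sum_rpow_neg_mul_dickWtV_le (hb : 1 < b) (a : Fin s → ℝ) (hr : 0 < r) (hr1 : r ≤ 1)
    (u : Finset (Fin s → ℕ)) :
    ∑ k ∈ u, (b : ℝ) ^ (-(r * dickWtV b a k)) ≤ Real.exp ((∑ j, dickConst b (a j)) / r) := by
  obtain ⟨M, hM⟩ := exists_subset_digitBox hb u
  calc ∑ k ∈ u, (b : ℝ) ^ (-(r * dickWtV b a k))
      ≤ ∑ k ∈ digitBox b M s, (b : ℝ) ^ (-(r * dickWtV b a k)) :=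
        Finset.sum_le_sum_of_subset_of_nonneg hM fun _ _ _ => by positivity
    _ = ∑ k ∈ digitBox b M s, ∏ j, (b : ℝ) ^ (-(r * dickWt b (a j) (k j))) := by
        simp only [dickWtV, Finset.mul_sum, ← Finset.sum_neg_distrib,
          Real.rpow_sum_of_pos (show (0 : ℝ) < b by positivity)]
    _ = ∏ j, ∑ k ∈ Finset.range (b ^ M), (b : ℝ) ^ (-(r * dickWt b (a j) k)) := by
        rw [digitBox, Finset.prod_univ_sum]
    _ ≤ ∏ j, Real.exp (dickConst b (a j) / r) :=
        Finset.prod_le_prod (fun _ _ => Finset.sum_nonneg fun _ _ => by positivity) fun j _ =>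
          sum_rpow_neg_mul_dickWt_le hb (a j) hr hr1 M
    _ = Real.exp ((∑ j, dickConst b (a j)) / r) := by rw [Finset.sum_div, Real.exp_sum]

lemma summable_rpow_neg_mul_dickWtV (hb : 1 < b) (a : Fin s → ℝ) (hr : 0 < r) (hr1 : r ≤ 1) :
    Summable fun k : Fin s → ℕ => (b : ℝ) ^ (-(r * dickWtV b a k)) :=
  summable_of_sum_le (fun _ => by positivity) (sum_rpow_neg_mul_dickWtV_le hb a hr hr1)

end SumOfWeights

lemma finite_dickWtV_le (hb : 1 < b) (a : Fin s → ℝ) (T : ℝ) :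
    {k : Fin s → ℕ | dickWtV b a k ≤ T}.Finite := by
  have hb' : (1 : ℝ) ≤ b := by exact_mod_cast hb.le
  have hlt := (summable_rpow_neg_mul_dickWtV hb a one_pos le_rfl).tendsto_cofinite_zero
    |>.eventually_lt_const (u := (b : ℝ) ^ (-T)) (by positivity)
  refine (Filter.eventually_cofinite.1 hlt).subset fun k hk => ?_
  simp only [Set.mem_ofPred_eq, not_lt, one_mul] at hk ⊢
  exact Real.rpow_le_rpow_of_exponent_le hb' (neg_le_neg hk)

/-- Rankin's trick: `b ^ (R - μ_a(k) / R) ≥ 1` on the set being counted. -/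
lemma ncard_dickWtV_le (hb : 1 < b) (a : Fin s → ℝ) {R : ℝ} (hR : 1 ≤ R) :
    ({k : Fin s → ℕ | dickWtV b a k ≤ R ^ 2}.ncard : ℝ)
      ≤ Real.exp ((Real.log b + ∑ j, dickConst b (a j)) * R) := by
  have hb' : (1 : ℝ) ≤ b := by exact_mod_cast hb.le
  have hR0 : 0 < R := by linarith
  have hfin := finite_dickWtV_le hb a (R ^ 2)
  have hterm (k : Fin s → ℕ) (hk : k ∈ hfin.toFinset) :
      (1 : ℝ) ≤ (b : ℝ) ^ R * (b : ℝ) ^ (-(1 / R * dickWtV b a k)) := by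
    have hkR : 1 / R * dickWtV b a k ≤ R := by
      rw [one_div, inv_mul_eq_div, div_le_iff₀ hR0, ← sq]
      simpa using hk
    rw [← Real.rpow_add (by positivity)]
    exact Real.one_le_rpow hb' (by linarith)
  rw [Set.ncard_eq_toFinset_card _ hfin]
  calc (hfin.toFinset.card : ℝ) = ∑ k ∈ hfin.toFinset, 1 := by simp
    _ ≤ ∑ k ∈ hfin.toFinset, (b : ℝ) ^ R * (b : ℝ) ^ (-(1 / R * dickWtV b a k)) :=
        Finset.sum_le_sum hterm
    _ ≤ (b : ℝ) ^ R * Real.exp ((∑ j, dickConst b (a j)) / (1 / R)) := by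
        rw [← Finset.mul_sum]
        gcongr
        exact sum_rpow_neg_mul_dickWtV_le hb a (by positivity) ((div_le_one hR0).2 hR) _
    _ = Real.exp ((Real.log b + ∑ j, dickConst b (a j)) * R) := by
        rw [Real.rpow_def_of_pos (by positivity), ← Real.exp_add]
        field_simp

end DickWeights

/-! ### Lower bound -/

/-- The Walsh–Dirichlet kernel `∑_{k ∈ digitBox} wal_k(x) conj(wal_k(y))` as a function of `x`,
defined by its closed form: the indicator function of the elementary box of the points `x` sharing
the first `m` digits of every coordinate with `y`, normalized to have integral `1`. -/
def walshKernel (b m : ℕ) {s : ℕ} (y x : Fin s → ℝ) : ℝ :=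
  ∏ j, ∏ i ∈ Finset.range m, if realDigit b (x j) i = realDigit b (y j) i then (b : ℝ) else 0

section LowerBound

variable {b m s : ℕ}

lemma walshKernel_comm (x y : Fin s → ℝ) : walshKernel b m x y = walshKernel b m y x := by
  simp only [walshKernel, eq_comm]

lemma walshKernel_eq_zero_or (y x : Fin s → ℝ) :
    walshKernel b m y x = 0 ∨ walshKernel b m y x = (b : ℝ) ^ (m * s) := by
  simp only [walshKernel, Finset.prod_ite_zero, Finset.prod_const, Finset.card_range,
    Finset.card_univ, Fintype.card_fin, ← pow_mul]
  exact (ite_eq_or_eq _ _ _).symm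

lemma sum_wal1_mul_conj (hb : 1 < b) (x y : ℝ) :
    ∑ k ∈ Finset.range (b ^ m), wal1 b k x * (starRingEnd ℂ) (wal1 b k y)
      = ∏ i ∈ Finset.range m, if realDigit b x i = realDigit b y i then (b : ℂ) else 0 := by
  have hdigit (x : ℝ) (i : ℕ) : realDigit b x i < b := realDigit_lt (by lia) x i
  simp only [← sum_walshRoot_pow_mul_conj (hdigit x _) (hdigit y _)]
  rw [← sum_prod_natDigit m fun i d => walshRoot b ^ (d * realDigit b x i) *
    (starRingEnd ℂ) (walshRoot b ^ (d * realDigit b y i))]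
  exact Finset.sum_congr rfl fun k hk =>
    wal1_mul_conj_wal1 hb (Finset.mem_range.1 hk) (Finset.mem_range.1 hk) x y

lemma walshKernel_eq_sum (hb : 1 < b) (y x : Fin s → ℝ) :
    (walshKernel b m y x : ℂ) = ∑ k ∈ digitBox b m s, (starRingEnd ℂ) (wal b k y) * wal b k x := by
  have hcast : (walshKernel b m y x : ℂ) = ∏ j, ∏ i ∈ Finset.range m,
      if realDigit b (x j) i = realDigit b (y j) i then (b : ℂ) else 0 := by
    simp only [walshKernel, Complex.ofReal_prod, apply_ite Complex.ofReal, Complex.ofReal_natCast,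
      Complex.ofReal_zero]
  simp only [hcast, ← sum_wal1_mul_conj hb]
  rw [Finset.prod_univ_sum, digitBox]
  simp only [wal, map_prod, ← Finset.prod_mul_distrib, mul_comm]

lemma intBox_walshKernel (hb : 1 < b) (y : Fin s → ℝ) : intBox s (walshKernel b m y) = 1 := by
  have h0 : (0 : Fin s → ℕ) ∈ digitBox b m s := mem_digitBox.2 fun _ => pow_pos (by lia) m
  have h : (intBox s (walshKernel b m y) : ℂ) = 1 := by
    rw [intBox_eq_walshCoeff_zero b, walshCoeff_of_eq_sum hb (walshKernel_eq_sum hb y), if_pos h0,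
      wal_zero, map_one]
  exact_mod_cast h

lemma measurable_walshKernel (y : Fin s → ℝ) : Measurable (walshKernel b m y) :=
  Finset.measurable_prod _ fun j _ => Finset.measurable_prod _ fun i _ =>
    Measurable.ite (measurableSet_eq_fun ((measurable_realDigit b i).comp (measurable_pi_apply j))
      measurable_const) measurable_const measurable_const

lemma integrableOn_walshKernel (y : Fin s → ℝ) :
    IntegrableOn (walshKernel b m y) (unitCube s) := by
  refine Integrable.of_bound (measurable_walshKernel y).aestronglyMeasurable ((b : ℝ) ^ (m * s))
    (.of_forall fun x => ?_)
  rcases walshKernel_eq_zero_or (b := b) (m := m) y x with h | h <;> simp [h]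

/-- The kernels centred at the `n` nodes integrate to `n` in total, so at some `y` their sum is less
than their only nonzero value `b ^ (m * s)`. -/
lemma exists_walshKernel_eq_zero {n : ℕ} (hb : 1 < b) (hn : n < b ^ (m * s))
    (t : Fin n → Fin s → ℝ) : ∃ y, ∀ i, walshKernel b m y (t i) = 0 := by
  have hint : IntegrableOn (fun y => ∑ i, walshKernel b m (t i) y) (unitCube s) :=
    integrable_finsetSum _ fun i _ => integrableOn_walshKernel (t i)
  have htotal : ∫ y in unitCube s, ∑ i, walshKernel b m (t i) y = n := by
    rw [integral_finsetSum _ fun i _ => integrableOn_walshKernel (t i)]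
    simpa [intBox] using Finset.sum_congr rfl fun i (_ : i ∈ Finset.univ) =>
      intBox_walshKernel (m := m) hb (t i)
  obtain ⟨y, hy⟩ := exists_le_integral hint
  have hnonneg (i : Fin n) : 0 ≤ walshKernel b m (t i) y := by
    rcases walshKernel_eq_zero_or (b := b) (m := m) (t i) y with h | h <;> rw [h]
    positivity
  refine ⟨y, fun i => ?_⟩
  rw [walshKernel_comm]
  refine (walshKernel_eq_zero_or (t i) y).resolve_right (ne_of_lt ?_)
  calc walshKernel b m (t i) y
      ≤ ∑ i, walshKernel b m (t i) y :=
        Finset.single_le_sum (fun i _ => hnonneg i) (Finset.mem_univ i)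
    _ ≤ n := hy.trans_eq htotal
    _ < (b : ℝ) ^ (m * s) := by exact_mod_cast hn

lemma rpow_neg_le_minErr {n : ℕ} (hb : 1 < b) (hn : n < b ^ (m * s)) {a : Fin s → ℝ} {X : ℝ}
    (hX : ∀ k ∈ digitBox b m s, dickWtV b a k ≤ X) :
    ENNReal.ofReal ((b : ℝ) ^ (-X)) ≤ minErr n s {f | MemW b a f} (normW b a) := by
  have hb' : (1 : ℝ) ≤ b := by exact_mod_cast hb.le
  refine le_minErr_of_fooling fun t _ => ?_
  obtain ⟨y, hy⟩ := exists_walshKernel_eq_zero hb hn t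
  set f : (Fin s → ℝ) → ℝ := fun x => (b : ℝ) ^ (-X) * walshKernel b m y x with hf
  have hexpand (x : Fin s → ℝ) : (f x : ℂ) =
      ∑ k ∈ digitBox b m s, ((b : ℝ) ^ (-X) : ℝ) * (starRingEnd ℂ) (wal b k y) * wal b k x := by
    simp only [hf, Complex.ofReal_mul, walshKernel_eq_sum hb, Finset.mul_sum, mul_assoc]
  have hcoeff (k : Fin s → ℕ) (hk : k ∈ digitBox b m s) :
      ‖((b : ℝ) ^ (-X) : ℝ) * (starRingEnd ℂ) (wal b k y)‖ * (b : ℝ) ^ dickWtV b a k ≤ 1 := by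
    rw [norm_mul, RCLike.norm_conj, norm_wal, mul_one, Complex.norm_real, Real.norm_eq_abs,
      abs_of_nonneg (by positivity), ← Real.rpow_add (by positivity)]
    exact Real.rpow_le_one_of_one_le_of_nonpos hb' (by linarith [hX k hk])
  obtain ⟨hmem, hnorm⟩ := memW_and_normW_le_one_of_eq_sum hb hexpand hcoeff
  have hintegral : intBox s f = (b : ℝ) ^ (-X) := by
    have := intBox_walshKernel (m := m) hb y
    rw [intBox] at this ⊢
    rw [integral_const_mul, this, mul_one]
  exact ⟨f, hmem, hmem.neg, hnorm, (normW_neg a f).trans_le hnorm, fun i => by simp [hf, hy i],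
    hintegral.ge⟩

/-- Take `m = ⌊log n / (s log b)⌋ + 1`, the least number of digits with `n < b ^ (m * s)`. -/
lemma exists_exp_le_minErr (hb : 1 < b) (hs : 0 < s) (a : Fin s → ℝ) :
    ∃ c₁ c₂ : ℝ, 0 < c₁ ∧ 0 < c₂ ∧ ∀ n : ℕ, 0 < n →
      ENNReal.ofReal
          (Real.exp (-(Real.log n) ^ 2 / (2 * s * Real.log b) - c₁ * Real.log n - c₂)) ≤
        minErr n s {f | MemW b a f} (normW b a) := by
  have hs' : (0 : ℝ) < s := by exact_mod_cast hs
  have hlogb : 0 < Real.log b := Real.log_pos (by exact_mod_cast hb)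
  set α := ∑ j, |a j|
  have hα : 0 ≤ α := Finset.sum_nonneg fun _ _ => abs_nonneg _
  refine ⟨(3 * s / 2 + α) / s, (s + α) * Real.log b, by positivity, by positivity, fun n hn => ?_⟩
  set L := Real.log n / (s * Real.log b) with hL
  have hL0 : 0 ≤ L := div_nonneg (Real.log_natCast_nonneg n) (by positivity)
  have hlogn : Real.log n = L * (s * Real.log b) := by rw [hL]; field_simp
  set m := ⌊L⌋₊ + 1 with hm
  have hmL : (m : ℝ) ≤ L + 1 := by
    rw [hm]; push_cast; linarith [Nat.floor_le hL0]
  have hLm : L < m := by rw [hm]; exact_mod_cast Nat.lt_floor_add_one L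
  have hnm : n < b ^ (m * s) := by
    have : (n : ℝ) < (b : ℝ) ^ (m * s) := by
      rw [← Real.log_lt_log_iff (by positivity) (by positivity), Real.log_pow, hlogn]
      push_cast
      rw [mul_assoc]
      gcongr
    exact_mod_cast this
  refine le_trans (ENNReal.ofReal_le_ofReal ?_)
    (rpow_neg_le_minErr hb hnm fun k hk => dickWtV_le hb a hk)
  rw [Real.rpow_def_of_pos (by positivity), Real.exp_le_exp, hlogn]
  calc -(L * (s * Real.log b)) ^ 2 / (2 * s * Real.log b)
          - (3 * s / 2 + α) / s * (L * (s * Real.log b)) - (s + α) * Real.log b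
      = Real.log b * -(s * ((L + 1) * (L + 1 + 1) / 2) + (L + 1) * α) := by field_simp; ring
    _ ≤ Real.log b * -(s * (m * (m + 1) / 2) + m * α) := by gcongr

end LowerBound

/-! ### Positive quadrature -/

section Quadrature

lemma exists_fin_convexCombination_of_mem_convexHull {𝕜 E : Type*} [Field 𝕜] [LinearOrder 𝕜]
    [IsStrictOrderedRing 𝕜] [AddCommGroup E] [Module 𝕜 E] [FiniteDimensional 𝕜 E] {S : Set E}
    {x : E} (hx : x ∈ convexHull 𝕜 S) {n : ℕ} (hn : Module.finrank 𝕜 E + 1 ≤ n) :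
    ∃ (z : Fin n → E) (w : Fin n → 𝕜), (∀ i, z i ∈ S) ∧ (∀ i, 0 ≤ w i) ∧ ∑ i, w i = 1 ∧
      ∑ i, w i • z i = x := by
  obtain ⟨p, hp⟩ := convexHull_nonempty_iff.1 ⟨x, hx⟩
  obtain ⟨ι, _, z, w, hz, hindep, hw, hw1, hsum⟩ := eq_pos_convex_span_of_mem_convexHull hx
  have hcard : Fintype.card ι ≤ Fintype.card (Fin n) := by
    rw [Fintype.card_fin]
    exact hindep.card_le_finrank_succ.trans ((Nat.succ_le_succ (Submodule.finrank_le _)).trans hn)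
  obtain ⟨e⟩ := Function.Embedding.nonempty_of_card_le hcard
  set z' : Fin n → E := Function.extend e z fun _ => p
  set w' : Fin n → 𝕜 := Function.extend e w 0
  have hz' (i : ι) : z' (e i) = z i := e.injective.extend_apply _ _ i
  have hw' (i : ι) : w' (e i) = w i := e.injective.extend_apply _ _ i
  have hz'p {i : Fin n} (hi : i ∉ Set.range e) : z' i = p := Function.extend_apply' _ _ _ hi
  have hw'0 {i : Fin n} (hi : i ∉ Set.range e) : w' i = 0 := Function.extend_apply' _ _ _ hi
  refine ⟨z', w', fun i => ?_, fun i => ?_, ?_, ?_⟩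
  · by_cases hi : i ∈ Set.range e
    · obtain ⟨j, rfl⟩ := hi
      exact hz' j ▸ hz ⟨j, rfl⟩
    · exact hz'p hi ▸ hp
  · by_cases hi : i ∈ Set.range e
    · obtain ⟨j, rfl⟩ := hi
      exact hw' j ▸ (hw j).le
    · exact (hw'0 hi).ge
  · rw [← hw1]
    exact (Fintype.sum_of_injective e e.injective _ _ (fun _ => hw'0) fun j => (hw' j).symm).symm
  · rw [← hsum]
    refine (Fintype.sum_of_injective e e.injective _ _ (fun i hi => ?_) fun j => ?_).symm
    · rw [hw'0 hi, zero_smul]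
    · rw [hw', hz']

/-- Tchakaloff's theorem for maps with finite range. -/
lemma exists_quadrature_eq_integral {X E : Type*} [MeasurableSpace X] {μ : Measure X}
    [IsProbabilityMeasure μ] [NormedAddCommGroup E] [NormedSpace ℝ E] [FiniteDimensional ℝ E]
    {F : X → E} (hF : Integrable F μ) {S : Set X} (hS : ∀ᵐ x ∂μ, x ∈ S) (hFS : (F '' S).Finite)
    {n : ℕ} (hn : Module.finrank ℝ E + 1 ≤ n) :
    ∃ (t : Fin n → X) (w : Fin n → ℝ), (∀ i, t i ∈ S) ∧ (∀ i, 0 ≤ w i) ∧ ∑ i, w i = 1 ∧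
      ∑ i, w i • F (t i) = ∫ x, F x ∂μ := by
  have hmem : ∫ x, F x ∂μ ∈ convexHull ℝ (F '' S) :=
    (convex_convexHull ℝ _).integral_mem (hFS.isClosed_convexHull ℝ)
      (hS.mono fun x hx => subset_convexHull ℝ _ ⟨x, hx, rfl⟩) hF
  obtain ⟨z, w, hz, hw, hw1, hsum⟩ := exists_fin_convexCombination_of_mem_convexHull hmem hn
  choose t ht hFt using hz
  exact ⟨t, w, ht, hw, hw1, by simpa only [hFt] using hsum⟩

variable {b n s : ℕ}

lemma finite_range_wal (hb : b ≠ 0) (A : Finset (Fin s → ℕ)) :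
    (Set.range fun x (k : A) => wal b k.1 x).Finite := by
  have hroots : {z : ℂ | z ^ b = 1}.Finite :=
    (Polynomial.nthRootsFinset b (1 : ℂ)).finite_toSet.subset fun z hz =>
      (Polynomial.mem_nthRootsFinset (Nat.pos_of_ne_zero hb) 1).2 hz
  refine (Set.Finite.pi' fun _ : A => hroots).subset ?_
  rintro _ ⟨x, rfl⟩ k
  exact wal_pow_eq_one hb k.1 x

lemma exists_quadrature_wal (hb : b ≠ 0) (A : Finset (Fin s → ℕ)) (hn : 2 * A.card + 1 ≤ n) :
    ∃ (t : Fin n → Fin s → ℝ) (w : Fin n → ℝ), (∀ i, t i ∈ unitCube s) ∧ (∀ i, 0 ≤ w i) ∧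
      ∑ i, w i = 1 ∧ ∀ k ∈ A, ∑ i, (w i : ℂ) * wal b k (t i) = ∫ x in unitCube s, wal b k x := by
  set F : (Fin s → ℝ) → A → ℂ := fun x k => wal b k.1 x
  have hmeas : Measurable F := measurable_pi_lambda _ fun k => measurable_wal b k.1
  have hF : IntegrableOn F (unitCube s) :=
    Integrable.of_bound hmeas.aestronglyMeasurable 1
      (.of_forall fun x => (pi_norm_le_iff_of_nonneg zero_le_one).2 fun k => (norm_wal k.1 x).le)
  have hcube : ∀ᵐ x ∂volume.restrict (unitCube s), x ∈ unitCube s :=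
    ae_restrict_mem (MeasurableSet.univ_pi fun _ => measurableSet_Ico)
  have hdim : Module.finrank ℝ (A → ℂ) + 1 ≤ n := by
    rw [Module.finrank_pi_fintype]
    simpa [mul_comm] using hn
  obtain ⟨t, w, ht, hw, hw1, hsum⟩ := exists_quadrature_eq_integral hF hcube
    ((finite_range_wal hb A).subset (Set.image_subset_range F _)) hdim
  refine ⟨t, w, ht, hw, hw1, fun k hk => ?_⟩
  have hcoord : (∫ x in unitCube s, F x) ⟨k, hk⟩ = ∫ x in unitCube s, wal b k x :=
    eval_integral (fun i => hF.eval i) ⟨k, hk⟩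
  rw [← hcoord, ← hsum, Finset.sum_apply]
  simp only [F, Pi.smul_apply, Complex.real_smul]

section QuadratureError

variable {t : Fin n → Fin s → ℝ} {w : Fin n → ℝ}

lemma norm_sum_mul_wal_le_one (hw : ∀ i, 0 ≤ w i) (hw1 : ∑ i, w i = 1) (k : Fin s → ℕ) :
    ‖∑ i, (w i : ℂ) * wal b k (t i)‖ ≤ 1 :=
  calc ‖∑ i, (w i : ℂ) * wal b k (t i)‖
      ≤ ∑ i, ‖(w i : ℂ) * wal b k (t i)‖ := norm_sum_le _ _
    _ = 1 := by simp [norm_wal, abs_of_nonneg (hw _), hw1]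

lemma hasSum_quadrature_error {f : (Fin s → ℝ) → ℝ} {a : Fin s → ℝ} (hf : MemW b a f)
    (ht : ∀ i, t i ∈ unitCube s) (hw1 : ∑ i, w i = 1) :
    HasSum (fun k => if k = 0 then 0 else -(walshCoeff b f k * ∑ i, (w i : ℂ) * wal b k (t i)))
      ((intBox s f - ∑ i, w i * f (t i) : ℝ) : ℂ) := by
  have hquad : HasSum (fun k => ∑ i, (w i : ℂ) * (walshCoeff b f k * wal b k (t i)))
      (∑ i, (w i : ℂ) * (f (t i) : ℂ)) :=
    hasSum_sum fun i _ => (hf.1 _ (ht i)).mul_left _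
  have hmean : HasSum (fun k : Fin s → ℕ => if k = 0 then walshCoeff b f 0 else 0)
      (walshCoeff b f 0) := hasSum_ite_eq 0 _
  push_cast
  rw [intBox_eq_walshCoeff_zero b]
  refine (hmean.sub hquad).congr_fun fun k => ?_
  have hw1' : ∑ i, (w i : ℂ) = 1 := by exact_mod_cast hw1
  split_ifs with hk
  · simp [hk, wal_zero, ← Finset.sum_mul, hw1']
  · simp only [zero_sub, Finset.mul_sum, mul_left_comm]

lemma abs_intBox_sub_quadrature_le (hb : 1 < b) {a : Fin s → ℝ} {T : ℝ}
    (ht : ∀ i, t i ∈ unitCube s) (hw : ∀ i, 0 ≤ w i) (hw1 : ∑ i, w i = 1)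
    (hexact : ∀ k, dickWtV b a k ≤ T →
      ∑ i, (w i : ℂ) * wal b k (t i) = ∫ x in unitCube s, wal b k x)
    {f : (Fin s → ℝ) → ℝ} (hf : MemW b a f) (hN : normW b a f ≤ 1) :
    |intBox s f - ∑ i, w i * f (t i)|
      ≤ (b : ℝ) ^ (-(T / 2)) * Real.exp ((∑ j, dickConst b (a j)) / (1 / 2)) := by
  have hb' : (1 : ℝ) ≤ b := by exact_mod_cast hb.le
  have hterm (k : Fin s → ℕ) :
      ‖if k = 0 then 0 else -(walshCoeff b f k * ∑ i, (w i : ℂ) * wal b k (t i))‖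
        ≤ (b : ℝ) ^ (-(T / 2)) * (b : ℝ) ^ (-(1 / 2 * dickWtV b a k)) := by
    split_ifs with hk
    · rw [norm_zero]
      positivity
    rcases le_or_gt (dickWtV b a k) T with hkT | hkT
    · rw [hexact k hkT, integral_wal_of_ne_zero hb hk, mul_zero, neg_zero, norm_zero]
      positivity
    calc ‖-(walshCoeff b f k * ∑ i, (w i : ℂ) * wal b k (t i))‖
        ≤ (b : ℝ) ^ (-dickWtV b a k) * 1 := by
          rw [norm_neg, norm_mul]
          exact mul_le_mul (norm_walshCoeff_le (by lia) hf hN k)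
            (norm_sum_mul_wal_le_one hw hw1 k) (norm_nonneg _) (by positivity)
      _ ≤ (b : ℝ) ^ (-(T / 2)) * (b : ℝ) ^ (-(1 / 2 * dickWtV b a k)) := by
          rw [mul_one, ← Real.rpow_add (by positivity)]
          exact Real.rpow_le_rpow_of_exponent_le hb' (by linarith)
  have hsum := sum_rpow_neg_mul_dickWtV_le hb a (r := 1 / 2) (by norm_num) (by norm_num)
  have hsummable :=
    summable_rpow_neg_mul_dickWtV hb a (r := 1 / 2) (by norm_num) (by norm_num)
  have herror := (hasSum_quadrature_error hf ht hw1).norm_le_of_bounded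
    (hsummable.hasSum.mul_left ((b : ℝ) ^ (-(T / 2)))) hterm
  rw [Complex.norm_real, Real.norm_eq_abs] at herror
  refine herror.trans ?_
  gcongr
  exact hsummable.tsum_le_of_sum_le hsum

end QuadratureError

end Quadrature

/-! ### Upper bound -/

section UpperBound

variable {b n s : ℕ}

lemma minErr_le_rpow_mul_exp (hb : 1 < b) (a : Fin s → ℝ) {T : ℝ}
    (hn : 2 * {k : Fin s → ℕ | dickWtV b a k ≤ T}.ncard + 1 ≤ n) :
    minErr n s {f | MemW b a f} (normW b a) ≤
      ENNReal.ofReal ((b : ℝ) ^ (-(T / 2)) * Real.exp ((∑ j, dickConst b (a j)) / (1 / 2))) := by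
  have hfin := finite_dickWtV_le hb a T
  rw [Set.ncard_eq_toFinset_card _ hfin] at hn
  obtain ⟨t, w, ht, hw, hw1, hexact⟩ := exists_quadrature_wal (b := b) (by lia) hfin.toFinset hn
  exact minErr_le_of_algorithm ht (fun v => ∑ i, w i * v i) fun f hf hN =>
    abs_intBox_sub_quadrature_le hb ht hw hw1 (fun k hk => hexact k (by simpa using hk)) hf hN

lemma minErr_le_one (hb : 0 < b) (a : Fin s → ℝ) :
    minErr n s {f | MemW b a f} (normW b a) ≤ 1 := by
  rw [← ENNReal.ofReal_one]
  refine minErr_le_of_algorithm (fun _ => zero_mem_unitCube s) (fun _ => 0) fun f hf hN => ?_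
  have hcoeff := norm_walshCoeff_le hb hf hN 0
  rw [← intBox_eq_walshCoeff_zero, Complex.norm_real, Real.norm_eq_abs] at hcoeff
  simpa [dickWtV, dickWt] using hcoeff

lemma two_mul_ncard_dickWtV_add_one_le (hb : 1 < b) (a : Fin s → ℝ) {R : ℝ} (hR : 1 ≤ R)
    (hn : Real.exp (R * (Real.log b + ∑ j, dickConst b (a j) + 2)) ≤ n) :
    2 * {k : Fin s → ℕ | dickWtV b a k ≤ R ^ 2}.ncard + 1 ≤ n := by
  set N := {k : Fin s → ℕ | dickWtV b a k ≤ R ^ 2}.ncard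
  set C := Real.log b + ∑ j, dickConst b (a j)
  have hC0 : 0 ≤ C := add_nonneg (Real.log_natCast_nonneg b)
    (Finset.sum_nonneg fun j _ => dickConst_nonneg (by lia) (a j))
  have hN : (N : ℝ) ≤ Real.exp (C * R) := ncard_dickWtV_le hb a hR
  have hone : 1 ≤ Real.exp (C * R) := Real.one_le_exp (by positivity)
  have hthree : 3 ≤ Real.exp (2 * R) := by linarith [Real.add_one_le_exp (2 * R)]
  have : (2 * N + 1 : ℝ) ≤ n :=
    calc (2 * N + 1 : ℝ) ≤ 3 * Real.exp (C * R) := by linarith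
      _ ≤ Real.exp (2 * R) * Real.exp (C * R) := by gcongr
      _ = Real.exp (R * (C + 2)) := by rw [← Real.exp_add]; ring_nf
      _ ≤ n := hn
  exact_mod_cast this

lemma exists_minErr_le_exp (hb : 1 < b) (a : Fin s → ℝ) :
    ∃ c₃ c₄ : ℝ, 0 < c₃ ∧ 0 < c₄ ∧ ∀ n : ℕ,
      minErr n s {f | MemW b a f} (normW b a) ≤
        ENNReal.ofReal (c₃ * Real.exp (-c₄ * (Real.log n) ^ 2)) := by
  set B := Real.log b with hB
  set K := ∑ j, dickConst b (a j)
  have hB0 : 0 < B := Real.log_pos (by exact_mod_cast hb)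
  have hK0 : 0 ≤ K := Finset.sum_nonneg fun j _ => dickConst_nonneg (by lia) (a j)
  set D := B + K + 2
  have hD0 : 0 < D := by positivity
  refine ⟨Real.exp (K / (1 / 2)) + Real.exp (B / 2), B / (2 * D ^ 2), by positivity,
    by positivity, fun n => ?_⟩
  obtain ⟨R, hlog⟩ : ∃ R, Real.log n = R * D := ⟨Real.log n / D, by field_simp⟩
  have hR0 : 0 ≤ R :=
    nonneg_of_mul_nonneg_left (hlog ▸ Real.log_natCast_nonneg n) hD0
  have hexponent : -(B / (2 * D ^ 2)) * (R * D) ^ 2 = B * -(R ^ 2 / 2) := by field_simp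
  rw [hlog, hexponent, add_mul]
  rcases le_or_gt 1 R with hR | hR
  · have hn : Real.exp (R * D) ≤ n := by
      have hn0 : (n : ℝ) ≠ 0 := by
        rintro h0
        rw [h0, Real.log_zero] at hlog
        exact (mul_pos (by linarith) hD0).ne hlog
      rw [← hlog, Real.exp_log (by positivity)]
    refine (minErr_le_rpow_mul_exp hb a (two_mul_ncard_dickWtV_add_one_le hb a hR hn)).trans
      (ENNReal.ofReal_le_ofReal ?_)
    rw [Real.rpow_def_of_pos (by positivity), ← hB, mul_comm]
    exact le_add_of_nonneg_right (by positivity)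
  · refine (minErr_le_one (by lia) a).trans (ENNReal.one_le_ofReal.2 ?_)
    have hR2 : R ^ 2 ≤ 1 := pow_le_one₀ hR0 hR.le
    refine le_add_of_nonneg_of_le (by positivity) ?_
    rw [← Real.exp_add]
    exact Real.one_le_exp (by nlinarith)

end UpperBound

theorem statement0_general (b : ℕ) (hb : 2 ≤ b) (s : ℕ) (hs : 0 < s) (a : Fin s → ℝ) :
    ∃ c₁ c₂ c₃ c₄ : ℝ, 0 < c₁ ∧ 0 < c₂ ∧ 0 < c₃ ∧ 0 < c₄ ∧
      ∀ n : ℕ, 0 < n →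
        ENNReal.ofReal
            (Real.exp (-(Real.log n) ^ 2 / (2 * s * Real.log b) - c₁ * Real.log n - c₂)) ≤
          minErr n s {f | MemW b a f} (normW b a) ∧
        minErr n s {f | MemW b a f} (normW b a) ≤
          ENNReal.ofReal (c₃ * Real.exp (-c₄ * (Real.log n) ^ 2)) := by
  obtain ⟨c₁, c₂, hc₁, hc₂, hlower⟩ := exists_exp_le_minErr hb hs a
  obtain ⟨c₃, c₄, hc₃, hc₄, hupper⟩ := exists_minErr_le_exp hb a
  exact ⟨c₁, c₂, c₃, c₄, hc₁, hc₂, hc₃, hc₄, fun n hn => ⟨hlower n hn, hupper n⟩⟩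

/-- two-sided bounds of order `exp(Θ(-(log n)^2))` for the `n`-th minimal
worst-case error of integration in the Walsh space `W_{s,a}`. -/
theorem statement0 (b : ℕ) (hb : 2 ≤ b) (s : ℕ) (hs : 0 < s) (a : ℕ → ℝ) (ha : Monotone a) :
    ∃ c₁ c₂ c₃ c₄ : ℝ, 0 < c₁ ∧ 0 < c₂ ∧ 0 < c₃ ∧ 0 < c₄ ∧
      ∀ n : ℕ, 0 < n →
        ENNReal.ofReal
            (Real.exp (-(Real.log n) ^ 2 / (2 * s * Real.log b) - c₁ * Real.log n - c₂)) ≤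
          minErr n s {f | MemW b (fun j : Fin s => a j) f} (normW b (fun j : Fin s => a j)) ∧
        minErr n s {f | MemW b (fun j : Fin s => a j) f} (normW b (fun j : Fin s => a j)) ≤
          ENNReal.ofReal (c₃ * Real.exp (-c₄ * (Real.log n) ^ 2)) := by
  exact statement0_general b hb s hs fun j => a j

end
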